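/- Let R_r, R_i ∈ ℝ^{d×d} be symmetric matrices with R_i positive semidefinite, let N ≥ 0 and L ∈ ℝ^{d×N}, and set ρ'(x) = 2(R_r + i R_i)x for x ∈ ℂ^d. Let λ = { (x, ρ'(x) + Lθ) : x ∈ ℂ^d, θ ∈ ℂ^N, L^t x = 0 } ⊆ ℂ^d × ℂ^d. Then for every X = (x, ρ'(x) + Lθ) ∈ λ one has i·σ(X̄, X) = 4·⟨R_i x, x̄⟩ (a nonnegative real number); in particular, for X ∈ λ, σ(X̄, X) = 0 if and only if R_i x = 0. -/

import Mathlib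

open Matrix Complex

namespace Stmt11

/-- Bilinear (non-sesquilinear) pairing `⟨u,v⟩ = Σ_j u_j v_j` on `ℂ^d`. -/
noncomputable def pairC {d : ℕ} (u v : Fin d → ℂ) : ℂ := ∑ j, u j * v j

/-- Canonical symplectic form `σ((x,ξ),(x',ξ')) = ⟨x',ξ⟩ − ⟨x,ξ'⟩` on `ℂ^d × ℂ^d`. -/
noncomputable def sform {d : ℕ} (X Y : (Fin d → ℂ) × (Fin d → ℂ)) : ℂ :=
  pairC Y.1 X.2 - pairC X.1 Y.2

/-- Entrywise complex conjugation of a vector. -/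
noncomputable def conjV {d : ℕ} (x : Fin d → ℂ) : Fin d → ℂ := fun j => starRingEnd ℂ (x j)

lemma herm_map {d : ℕ} (R : Matrix (Fin d) (Fin d) ℝ) (h : R.IsSymm) :
    (R.map ((↑) : ℝ → ℂ)).IsHermitian := by
  ext i j
  simp [Matrix.conjTranspose_apply, h.apply i j]

open scoped ComplexOrder MatrixOrder in
lemma psd_map {d : ℕ} (R : Matrix (Fin d) (Fin d) ℝ) (h : R.PosSemidef) :
    (R.map ((↑) : ℝ → ℂ)).PosSemidef := by
  obtain ⟨B, hB⟩ := CStarAlgebra.nonneg_iff_eq_star_mul_self.mp h.nonneg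
  have : R.map ((↑) : ℝ → ℂ) = (B.map ((↑) : ℝ → ℂ))ᴴ * B.map ((↑) : ℝ → ℂ) := by
    ext i j
    simp [hB, Matrix.star_eq_conjTranspose, Matrix.mul_apply, Matrix.conjTranspose_apply]
  rw [this]
  exact Matrix.posSemidef_conjTranspose_mul_self _

open scoped ComplexOrder in
lemma psd_facts {d : ℕ} (R : Matrix (Fin d) (Fin d) ℝ) (h : R.PosSemidef) (x : Fin d → ℂ) :
    (0 ≤ (star x ⬝ᵥ (R.map ((↑) : ℝ → ℂ)) *ᵥ x).re ∧
      (star x ⬝ᵥ (R.map ((↑) : ℝ → ℂ)) *ᵥ x).im = 0) ∧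
    (star x ⬝ᵥ (R.map ((↑) : ℝ → ℂ)) *ᵥ x = 0 ↔ (R.map ((↑) : ℝ → ℂ)) *ᵥ x = 0) := by
  have h0 := Complex.le_def.mp ((psd_map R h).dotProduct_mulVec_nonneg x)
  exact ⟨⟨h0.1, h0.2.symm⟩, (psd_map R h).dotProduct_mulVec_zero_iff x⟩

lemma herm_real {d : ℕ} (A : Matrix (Fin d) (Fin d) ℂ) (h : A.IsHermitian) (x : Fin d → ℂ) :
    star (star x ⬝ᵥ A *ᵥ x) = star x ⬝ᵥ A *ᵥ x := by
  conv_lhs => rw [← Matrix.star_dotProduct_star, star_star, Matrix.star_mulVec, h.eq,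
    ← Matrix.dotProduct_mulVec]

lemma sform_eq {d : ℕ} (x ξ : Fin d → ℂ) :
    sform (conjV x, conjV ξ) (x, ξ) = star (star x ⬝ᵥ ξ) - star x ⬝ᵥ ξ := by
  simp [sform, pairC, conjV, dotProduct]

/-- Remark: intrinsic characterization of `λ̃ ⊆ λ`.  With
`ρ'(x) = 2(R_r + i R_i)x` and `λ = { (x, ρ'(x) + Lθ) : Lᵗ x = 0 }`, every element
`X = (x, ρ'(x) + Lθ)` of `λ` satisfies `i σ(X̄,X) = 4⟨R_i x, x̄⟩`, a nonnegative real
number; in particular `σ(X̄,X) = 0` iff `R_i x = 0`. -/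
theorem stmt_11 (d N : ℕ) (Rr Ri : Matrix (Fin d) (Fin d) ℝ)
    (hRr : Rr.IsSymm) (hRi : Ri.IsSymm) (hRiPos : Ri.PosSemidef)
    (L : Matrix (Fin d) (Fin N) ℝ) :
    ∀ (x : Fin d → ℂ) (θ : Fin N → ℂ),
      (L.map ((↑) : ℝ → ℂ))ᵀ.mulVec x = 0 →
      (letI ρ' : Fin d → ℂ :=
        (2 : ℂ) • (Rr.map ((↑) : ℝ → ℂ) + Complex.I • Ri.map ((↑) : ℝ → ℂ)).mulVec x
       letI X : (Fin d → ℂ) × (Fin d → ℂ) :=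
        (x, ρ' + (L.map ((↑) : ℝ → ℂ)).mulVec θ)
       Complex.I * sform (conjV X.1, conjV X.2) X
          = 4 * pairC ((Ri.map ((↑) : ℝ → ℂ)).mulVec x) (conjV x) ∧
       (∃ r : ℝ, 0 ≤ r ∧
          Complex.I * sform (conjV X.1, conjV X.2) X = r) ∧
       (sform (conjV X.1, conjV X.2) X = 0 ↔
          (Ri.map ((↑) : ℝ → ℂ)).mulVec x = 0)) := by
  intro x θ hL
  obtain ⟨⟨h0, h0'⟩, hz⟩ := psd_facts Ri hRiPos x
  have h1 := herm_real _ (herm_map Rr hRr) x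
  have h2 := herm_real _ (herm_map Ri hRi) x
  have hp : pairC ((Ri.map ((↑) : ℝ → ℂ)).mulVec x) (conjV x)
      = star x ⬝ᵥ (Ri.map ((↑) : ℝ → ℂ)) *ᵥ x := by
    simp [pairC, conjV, dotProduct, mul_comm]
  have hLz : star x ⬝ᵥ (L.map ((↑) : ℝ → ℂ)) *ᵥ θ = 0 := by
    have h3 : (L.map ((↑) : ℝ → ℂ))ᵀ = (L.map ((↑) : ℝ → ℂ))ᴴ := by
      ext i j
      simp [Matrix.conjTranspose_apply]
    rw [h3] at hL
    have h4 := congrArg star hL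
    rw [Matrix.star_mulVec, Matrix.conjTranspose_conjTranspose] at h4
    rw [Matrix.dotProduct_mulVec, h4]
    simp
  have key : sform (conjV x, conjV ((2 : ℂ) • (Rr.map ((↑) : ℝ → ℂ)
        + Complex.I • Ri.map ((↑) : ℝ → ℂ)).mulVec x + (L.map ((↑) : ℝ → ℂ)).mulVec θ))
      (x, (2 : ℂ) • (Rr.map ((↑) : ℝ → ℂ)
        + Complex.I • Ri.map ((↑) : ℝ → ℂ)).mulVec x + (L.map ((↑) : ℝ → ℂ)).mulVec θ)
      = -4 * Complex.I * (star x ⬝ᵥ (Ri.map ((↑) : ℝ → ℂ)) *ᵥ x) := by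
    rw [sform_eq]
    simp only [Matrix.add_mulVec, Matrix.smul_mulVec, dotProduct_add, dotProduct_smul, hLz,
      star_add, star_mul', h1, h2, smul_eq_mul, star_zero]
    simp
    ring
  rw [← hz]
  dsimp only
  rw [key, hp]
  generalize star x ⬝ᵥ (Ri.map ((↑) : ℝ → ℂ)) *ᵥ x = b at *
  have e : Complex.I * (-4 * Complex.I * b) = 4 * b := by
    linear_combination (-4 * b) * Complex.I_mul_I
  refine ⟨e, ⟨4 * b.re, ?_, ?_⟩, ?_⟩
  · linarith
  · rw [e]
    apply Complex.ext <;> simp [h0']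
  · simp

end Stmt11
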